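/- Let A be an n×n real positive-semidefinite matrix, let 1 ≤ r ≤ k ≤ n, and let Ω be an n×k random matrix with independent standard normal entries. Define the rank-k Nyström approximation Â = AΩ((Ω*AΩ)†)Ω*A. Then E‖A − Â‖₁ ≤ min over natural numbers ϱ with ϱ < k − 1 of [(1 + ϱ/(k − ϱ − 1)) · σ_{ϱ+1}^{(1)}(A)], where σ_{ϱ+1}^{(1)}(A) = Σ_{i > ϱ} σ_i(A) is the optimal rank-ϱ Schatten 1-norm approximation error. -/

import Mathlib

open Matrix MeasureTheory ProbabilityTheory
open scoped ENNReal NNReal ComplexOrder Classical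

namespace PsdSketch

variable {𝕜 : Type*} [RCLike 𝕜]

/-- The four Penrose conditions characterizing the Moore–Penrose pseudoinverse. -/
def IsMoorePenrose {m k : ℕ} (M : Matrix (Fin m) (Fin k) 𝕜)
    (X : Matrix (Fin k) (Fin m) 𝕜) : Prop :=
  M * X * M = M ∧ X * M * X = X ∧ (M * X)ᴴ = M * X ∧ (X * M)ᴴ = X * M

/-- The Moore–Penrose pseudoinverse `M†` (the unique matrix satisfying the
Penrose conditions). -/
noncomputable def pinv {m k : ℕ} (M : Matrix (Fin m) (Fin k) 𝕜) :
    Matrix (Fin k) (Fin m) 𝕜 :=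
  if h : ∃ X, IsMoorePenrose M X then h.choose else 0

/-- The Nyström approximation `Â = A Ω ((Ω* A Ω)†) Ω* A`. -/
noncomputable def nystrom {n k : ℕ} (A : Matrix (Fin n) (Fin n) 𝕜)
    (Ω : Matrix (Fin n) (Fin k) 𝕜) : Matrix (Fin n) (Fin n) 𝕜 :=
  A * Ω * pinv (Ωᴴ * A * Ω) * Ωᴴ * A

/-- The `i`-th singular value of a square matrix, 0-indexed and listed in weakly
decreasing order (so `sval M 0 = σ₁(M)`), with `sval M i = 0` for `i ≥ n`. -/
noncomputable def sval {n : ℕ} (M : Matrix (Fin n) (Fin n) 𝕜) (i : ℕ) : ℝ :=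
  if h : i < n then
    Real.sqrt
      ((Matrix.posSemidef_conjTranspose_mul_self M).1.eigenvalues
        (Tuple.sort (Matrix.posSemidef_conjTranspose_mul_self M).1.eigenvalues
          (Fin.rev ⟨i, h⟩)))
  else 0

/-- The Schatten `p`-norm: the `ℓ_p` norm of the vector of singular values. -/
noncomputable def schatten {n : ℕ} (p : ℝ≥0∞) (M : Matrix (Fin n) (Fin n) 𝕜) : ℝ :=
  if p = ∞ then sval M 0
  else (∑ i ∈ Finset.range n, sval M i ^ p.toReal) ^ (1 / p.toReal)

/-- `σ_{r+1}^{(p)}(M)`, the optimal rank-`r` approximation error of `M` in the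
Schatten `p`-norm: `(Σ_{i > r} σ_i(M)^p)^{1/p}` (for `p = ∞`, `σ_{r+1}(M)`). -/
noncomputable def tailNorm {n : ℕ} (p : ℝ≥0∞) (M : Matrix (Fin n) (Fin n) 𝕜)
    (r : ℕ) : ℝ :=
  if p = ∞ then sval M r
  else (∑ i ∈ Finset.Ico r n, sval M i ^ p.toReal) ^ (1 / p.toReal)

/-- `B` is a (simultaneous) best rank-`r` approximation of `M` with respect to every
Schatten `p`-norm; this is the defining property of an `r`-truncated SVD `⟦M⟧_r`. -/
def IsBestRankApprox {n : ℕ} (M B : Matrix (Fin n) (Fin n) 𝕜) (r : ℕ) : Prop :=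
  B.rank ≤ r ∧
    ∀ p : ℝ≥0∞, 1 ≤ p → ∀ C : Matrix (Fin n) (Fin n) 𝕜, C.rank ≤ r →
      schatten p (M - B) ≤ schatten p (M - C)

/-- `⟦M⟧_r`: a best rank-`r` approximation of `M` (an `r`-truncated SVD). -/
noncomputable def truncate {n : ℕ} (M : Matrix (Fin n) (Fin n) 𝕜) (r : ℕ) :
    Matrix (Fin n) (Fin n) 𝕜 :=
  if h : ∃ B, IsBestRankApprox M B r then h.choose else 0

/-- The distribution of an `n × k` random matrix with independent standard normal
entries (matrices identified with functions `Fin n → Fin k → ℝ`). -/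
noncomputable def gaussianEnsemble (n k : ℕ) : Measure (Fin n → Fin k → ℝ) :=
  Measure.pi fun _ => Measure.pi fun _ => gaussianReal 0 1

open scoped MatrixOrder in
lemma psd_eq_of_mul_self {n : ℕ} (A B : Matrix (Fin n) (Fin n) ℝ) (hA : A.PosSemidef)
    (hB : B.PosSemidef) (h : A * A = B * B) : A = B :=
  (CFC.mul_self_eq_mul_self_iff A B hA.nonneg hB.nonneg).1 h

lemma exists_diag {k : ℕ} (M : Matrix (Fin k) (Fin k) ℝ) (hM : M.IsHermitian) :
    ∃ U : Matrix (Fin k) (Fin k) ℝ, Uᴴ * U = 1 ∧ U * Uᴴ = 1 ∧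
      M = U * diagonal hM.eigenvalues * Uᴴ := by
  refine ⟨(hM.eigenvectorUnitary : Matrix (Fin k) (Fin k) ℝ), ?_, ?_, ?_⟩
  · exact Unitary.coe_star_mul_self hM.eigenvectorUnitary
  · exact Unitary.coe_mul_star_self hM.eigenvectorUnitary
  · have := hM.spectral_theorem
    rw [Unitary.conjStarAlgAut_apply] at this
    exact this

lemma exists_factor {n : ℕ} (A : Matrix (Fin n) (Fin n) ℝ) (hA : A.PosSemidef) :
    ∃ B : Matrix (Fin n) (Fin n) ℝ, A = Bᴴ * B := by
  obtain ⟨U, h1, h2, h3⟩ := exists_diag A hA.1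
  refine ⟨diagonal (fun i => Real.sqrt (hA.1.eigenvalues i)) * Uᴴ, ?_⟩
  rw [conjTranspose_mul, conjTranspose_conjTranspose, diagonal_conjTranspose, Matrix.mul_assoc,
    ← Matrix.mul_assoc (diagonal _) (diagonal _), diagonal_mul_diagonal, ← Matrix.mul_assoc]
  simp only [Pi.star_apply, star_trivial, Real.mul_self_sqrt (hA.eigenvalues_nonneg _)]
  exact h3

lemma exists_pinv {k : ℕ} (M : Matrix (Fin k) (Fin k) ℝ) (hM : M.IsHermitian) :
    IsMoorePenrose M (pinv M) := by
  have h : ∃ X, IsMoorePenrose M X := by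
    obtain ⟨U, hU1, hU2, hD⟩ := exists_diag M hM
    generalize hM.eigenvalues = D at hD
    have key : ∀ a b : Fin k → ℝ, (U * diagonal a * Uᴴ) * (U * diagonal b * Uᴴ)
        = U * diagonal (fun i => a i * b i) * Uᴴ := by
      intro a b
      calc _ = U * diagonal a * (Uᴴ * U) * diagonal b * Uᴴ := by simp only [Matrix.mul_assoc]
        _ = _ := by rw [hU1, Matrix.mul_one, Matrix.mul_assoc U, diagonal_mul_diagonal]
    have herm : ∀ a : Fin k → ℝ, (U * diagonal a * Uᴴ)ᴴ = U * diagonal a * Uᴴ := by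
      intro a
      simp [Matrix.mul_assoc]
    refine ⟨U * diagonal (fun i => (D i)⁻¹) * Uᴴ, ?_, ?_, ?_, ?_⟩
    · have e : (fun i => D i * (D i)⁻¹ * D i) = D := funext fun i => mul_inv_mul_cancel (D i)
      rw [hD, key, key, e]
    · have e : (fun i => (D i)⁻¹ * D i * (D i)⁻¹) = fun i => (D i)⁻¹ :=
        funext fun i => by simpa using mul_inv_mul_cancel (D i)⁻¹
      rw [hD, key, key, e]
    · rw [hD, key, herm]
    · rw [hD, key, herm]
  unfold pinv
  rw [dif_pos h]
  exact h.choose_spec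

lemma nystrom_identity {n k : ℕ} (A : Matrix (Fin n) (Fin n) ℝ) (hA : A.PosSemidef)
    (Ω : Matrix (Fin n) (Fin k) ℝ) :
    ∃ Y : Matrix (Fin k) (Fin n) ℝ, ∀ X : Matrix (Fin k) (Fin n) ℝ,
      A - nystrom A Ω = (1 - Ω * X)ᴴ * A * (1 - Ω * X) - (X - Y)ᴴ * (Ωᴴ * A * Ω) * (X - Y) := by
  set M := Ωᴴ * A * Ω with hMdef
  have hM : M.IsHermitian := (hA.conjTranspose_mul_mul_same Ω).1
  obtain ⟨h1, h2, h3, h4⟩ := exists_pinv M hM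
  set P := pinv M with hP
  have hAh : Aᴴ = A := hA.1
  have hC : M * (P * Ωᴴ * A) = Ωᴴ * A := by
    obtain ⟨B, hB⟩ := exists_factor A hA
    have hN : (1 - M * P) * Ωᴴ * Bᴴ = 0 := by
      rw [← Matrix.self_mul_conjTranspose_eq_zero]
      calc _ = (1 - M * P) * (Ωᴴ * (Bᴴ * B) * Ω) * (1 - M * P)ᴴ := by
            simp only [conjTranspose_mul, conjTranspose_conjTranspose, Matrix.mul_assoc]
        _ = ((1 - M * P) * M) * (1 - M * P)ᴴ := by rw [← hB]
        _ = 0 := by rw [Matrix.sub_mul, h1]; simp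
    have : (1 - M * P) * Ωᴴ * A = 0 := by
      rw [hB, ← Matrix.mul_assoc, hN, Matrix.zero_mul]
    rw [Matrix.sub_mul, Matrix.sub_mul, Matrix.one_mul, sub_eq_zero] at this
    rw [this]; simp only [Matrix.mul_assoc]
  set Y := P * Ωᴴ * A with hY
  have hC' : Yᴴ * M = A * Ω := by
    have := congrArg conjTranspose hC
    rw [conjTranspose_mul, hM.eq, conjTranspose_mul Ωᴴ, hAh, conjTranspose_conjTranspose] at this
    exact this
  refine ⟨Y, fun X => ?_⟩
  have hn : nystrom A Ω = Yᴴ * M * Y := by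
    rw [hC', hY, hP, hMdef]
    simp only [nystrom, Matrix.mul_assoc]
  have e1 : (1 - Ω * X)ᴴ * A * (1 - Ω * X)
      = A - Xᴴ * (Ωᴴ * A) - (A * Ω) * X + Xᴴ * M * X := by
    rw [conjTranspose_sub, conjTranspose_one, conjTranspose_mul, hMdef]
    simp only [Matrix.sub_mul, Matrix.mul_sub, Matrix.one_mul, Matrix.mul_one, Matrix.mul_assoc]
    abel
  rw [hn, e1, ← hC, ← hC', conjTranspose_sub]
  simp only [Matrix.sub_mul, Matrix.mul_sub, Matrix.mul_assoc]
  abel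

lemma nystrom_psd {n k : ℕ} (A : Matrix (Fin n) (Fin n) ℝ) (hA : A.PosSemidef)
    (Ω : Matrix (Fin n) (Fin k) ℝ) : (A - nystrom A Ω).PosSemidef := by
  obtain ⟨Y, hY⟩ := nystrom_identity A hA Ω
  have h := hA.conjTranspose_mul_mul_same (1 - Ω * Y)
  rw [hY Y, sub_self Y, Matrix.mul_zero, sub_zero]
  exact h

lemma nystrom_trace_le {n k : ℕ} (A : Matrix (Fin n) (Fin n) ℝ) (hA : A.PosSemidef)
    (Ω : Matrix (Fin n) (Fin k) ℝ) (X : Matrix (Fin k) (Fin n) ℝ) :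
    (A - nystrom A Ω).trace ≤ ((1 - Ω * X)ᴴ * A * (1 - Ω * X)).trace := by
  obtain ⟨Y, hY⟩ := nystrom_identity A hA Ω
  rw [hY X, Matrix.trace_sub]
  have := ((hA.conjTranspose_mul_mul_same Ω).conjTranspose_mul_mul_same (X - Y)).trace_nonneg
  linarith

lemma exists_sval_decomp {n : ℕ} (A : Matrix (Fin n) (Fin n) ℝ) (hA : A.PosSemidef) :
    ∃ U : Matrix (Fin n) (Fin n) ℝ, Uᴴ * U = 1 ∧ U * Uᴴ = 1 ∧
      A = U * diagonal (fun i : Fin n => sval A i) * Uᴴ := by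
  set H := (Matrix.posSemidef_conjTranspose_mul_self A).1 with hH
  obtain ⟨V, hV1, hV2, hs⟩ := exists_diag (Aᴴ * A) H
  have hnn : ∀ i, 0 ≤ H.eigenvalues i := (Matrix.posSemidef_conjTranspose_mul_self A).eigenvalues_nonneg
  set σ : Equiv.Perm (Fin n) := Fin.revPerm.trans (Tuple.sort H.eigenvalues) with hσ
  have hsv : ∀ i : Fin n, sval A i = Real.sqrt (H.eigenvalues (σ i)) := by
    intro i
    simp [sval, hσ]
  set B := V * diagonal (fun i => Real.sqrt (H.eigenvalues i)) * Vᴴ with hB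
  have hBp : B.PosSemidef := by
    refine Matrix.PosSemidef.mul_mul_conjTranspose_same ?_ V
    exact Matrix.PosSemidef.diagonal (fun i => Real.sqrt_nonneg _)
  have hBB : B * B = A * A := by
    have hAA : A * A = V * diagonal H.eigenvalues * Vᴴ := by
      rw [← hs, hA.1.eq]
    rw [hAA]
    calc B * B = V * diagonal (fun i => Real.sqrt (H.eigenvalues i)) * (Vᴴ * V)
          * diagonal (fun i => Real.sqrt (H.eigenvalues i)) * Vᴴ := by
          rw [hB]; simp only [Matrix.mul_assoc]
      _ = _ := by
        rw [hV1, Matrix.mul_one, Matrix.mul_assoc V, diagonal_mul_diagonal]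
        simp only [Real.mul_self_sqrt (hnn _)]
  have hAB : A = B := psd_eq_of_mul_self A B hA hBp hBB.symm
  refine ⟨V.submatrix id σ, ?_, ?_, ?_⟩
  · rw [conjTranspose_submatrix, ← submatrix_mul _ _ _ _ _ Function.bijective_id, hV1]
    simp
  · rw [conjTranspose_submatrix, ← submatrix_mul _ _ _ _ _ σ.bijective, hV2]
    simp
  · have : diagonal (fun i : Fin n => sval A i)
        = (diagonal (fun i => Real.sqrt (H.eigenvalues i))).submatrix σ σ := by
      ext i j
      simp only [diagonal_apply, submatrix_apply, hsv, EmbeddingLike.apply_eq_iff_eq]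
    rw [this, conjTranspose_submatrix, ← submatrix_mul _ _ _ _ _ σ.bijective,
      ← submatrix_mul _ _ _ _ _ σ.bijective, ← hB, ← hAB]
    simp

lemma sval_nonneg' {n : ℕ} (A : Matrix (Fin n) (Fin n) ℝ) (i : ℕ) : 0 ≤ sval A i := by
  unfold sval; split_ifs
  · exact Real.sqrt_nonneg _
  · exact le_rfl

lemma schatten_one_psd {n : ℕ} (A : Matrix (Fin n) (Fin n) ℝ) (hA : A.PosSemidef) :
    schatten 1 A = A.trace := by
  obtain ⟨U, h1, h2, h3⟩ := exists_sval_decomp A hA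
  have : A.trace = ∑ i : Fin n, sval A i := by
    conv_lhs => rw [h3, Matrix.trace_mul_comm, ← Matrix.mul_assoc, h1, Matrix.one_mul]
    simp [Matrix.trace_diagonal]
  rw [this]
  simp [schatten, Finset.sum_range]
lemma gauss_isometry {ι : Type*} [Fintype ι] (f : (ι → ℝ) →ₗ[ℝ] (ι → ℝ))
    (hf : ∀ x, ∑ i, (f x i) ^ 2 = ∑ i, (x i) ^ 2) :
    MeasurePreserving f (Measure.pi fun _ => gaussianReal 0 1)
      (Measure.pi fun _ => gaussianReal 0 1) := by
  let L : EuclideanSpace ℝ ι →ₗ[ℝ] EuclideanSpace ℝ ι :=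
    (WithLp.linearEquiv 2 ℝ (ι → ℝ)).symm.toLinearMap ∘ₗ f ∘ₗ
      (WithLp.linearEquiv 2 ℝ (ι → ℝ)).toLinearMap
  let L1 : EuclideanSpace ℝ ι →ₗᵢ[ℝ] EuclideanSpace ℝ ι := ⟨L, fun x => by
    rw [EuclideanSpace.norm_eq, EuclideanSpace.norm_eq]
    congr 1
    simpa [L] using hf _⟩
  let L2 := L1.toLinearIsometryEquiv rfl
  have h := stdGaussian_map L2
  rw [← map_pi_eq_stdGaussian] at h
  have hfc : Measurable f := (LinearMap.continuous_of_finiteDimensional f).measurable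
  refine ⟨hfc, ?_⟩
  apply (MeasurableEquiv.toLp 2 (ι → ℝ)).map_measurableEquiv_injective
  rw [MeasurableEquiv.coe_toLp]
  conv_rhs => rw [← h]
  rw [Measure.map_map (by fun_prop) hfc, Measure.map_map (by fun_prop) (by fun_prop)]
  rfl

lemma flatten_gauss (n k : ℕ) :
    MeasurePreserving (MeasurableEquiv.curry (Fin n) (Fin k) ℝ).symm (gaussianEnsemble n k)
      (Measure.pi fun _ => gaussianReal 0 1) := by
  refine ⟨MeasurableEquiv.measurable _, ?_⟩
  symm
  refine Measure.pi_eq fun s hs => ?_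
  rw [Measure.map_apply (MeasurableEquiv.measurable _) (MeasurableSet.univ_pi hs)]
  have : (MeasurableEquiv.curry (Fin n) (Fin k) ℝ).symm ⁻¹' (Set.univ.pi s)
      = Set.univ.pi (fun i => Set.univ.pi (fun j => s (i, j))) := by
    ext x
    simp only [Set.mem_preimage, Set.mem_univ_pi, Prod.forall]
    rfl
  rw [this, gaussianEnsemble, Measure.pi_pi]
  simp_rw [Measure.pi_pi]
  rw [Fintype.prod_prod_type]

lemma ensemble_rotation {n k : ℕ} (U : Matrix (Fin n) (Fin n) ℝ) (hU : Uᴴ * U = 1) :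
    MeasurePreserving (fun ω : Fin n → Fin k → ℝ => (fun i j => (U * Matrix.of ω) i j))
      (gaussianEnsemble n k) (gaussianEnsemble n k) := by
  let f : (Fin n × Fin k → ℝ) →ₗ[ℝ] (Fin n × Fin k → ℝ) :=
    { toFun := fun x p => ∑ l, U p.1 l * x (l, p.2)
      map_add' := fun x y => by ext p; simp [mul_add, Finset.sum_add_distrib]
      map_smul' := fun c x => by ext p; simp [Finset.mul_sum]; congr; ext; ring }
  have hf : ∀ x, ∑ i, (f x i) ^ 2 = ∑ i, (x i) ^ 2 := by
    intro x
    let M : Matrix (Fin n) (Fin k) ℝ := Matrix.of fun i j => x (i, j)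
    have e : ∀ N : Matrix (Fin n) (Fin k) ℝ, (Nᴴ * N).trace = ∑ i, ∑ j, (N i j) ^ 2 := by
      intro N
      rw [Finset.sum_comm]
      simp [Matrix.trace, Matrix.mul_apply, sq]
    have h1 : ((U * M)ᴴ * (U * M)).trace = (Mᴴ * M).trace := by
      rw [conjTranspose_mul, Matrix.mul_assoc, ← Matrix.mul_assoc Uᴴ, hU, Matrix.one_mul]
    rw [e, e] at h1
    rw [Fintype.sum_prod_type, Fintype.sum_prod_type]
    simpa [Matrix.mul_apply, M, f] using h1
  have h1 := flatten_gauss n k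
  have h2 := (MeasurePreserving.symm _ h1).comp ((gauss_isometry f hf).comp h1)
  convert h2 using 1
  ext ω i j
  rw [Matrix.mul_apply]
  rfl

lemma lintegral_inner_sq {k : ℕ} (z : Fin k → ℝ) :
    ∫⁻ g, ENNReal.ofReal ((∑ a, z a * g a) ^ 2) ∂(Measure.pi fun _ => gaussianReal 0 1)
      = ENNReal.ofReal (∑ a, (z a) ^ 2) := by
  have hL : ∀ a, MemLp (fun x : ℝ => z a * x) 2 (gaussianReal 0 1) :=
    fun a => IsGaussian.memLp_two_id.const_mul _
  have hLp : ∀ a, MemLp (fun x : Fin k → ℝ => z a * x a) 2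
      (Measure.pi fun _ => gaussianReal 0 1) := fun a =>
    (hL a).comp_measurePreserving (measurePreserving_eval _ a)
  have hv := variance_sum_pi (μ := fun _ : Fin k => gaussianReal 0 1)
    (X := fun a (x : ℝ) => z a * x) hL
  have h0 : ∫ g : Fin k → ℝ, (∑ a, z a * g a) ∂(Measure.pi fun _ => gaussianReal 0 1) = 0 := by
    rw [integral_finsetSum _ (fun a _ => (hLp a).integrable (by norm_num))]
    refine Finset.sum_eq_zero fun a _ => ?_
    rw [integral_const_mul, integral_eval (μ := fun _ : Fin k => gaussianReal 0 1)]
    simp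
  have hm : MemLp (fun g : Fin k → ℝ => ∑ a, z a * g a) 2
      (Measure.pi fun _ => gaussianReal 0 1) := memLp_finsetSum _ (fun a _ => hLp a)
  have he := evariance_eq_lintegral_ofReal (fun g : Fin k → ℝ => ∑ a, z a * g a)
    (Measure.pi fun _ => gaussianReal 0 1)
  rw [h0] at he
  simp only [sub_zero] at he
  rw [← he, ← hm.ofReal_variance_eq]
  congr 1
  have hs : (∑ a, fun x : Fin k → ℝ => z a * x a) = fun g : Fin k → ℝ => ∑ a, z a * g a := by
    ext g; simp
  rw [← hs, hv]
  refine Finset.sum_congr rfl fun a _ => ?_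
  have := variance_const_mul (z a) (fun x : ℝ => x) (gaussianReal 0 1)
  rw [this, variance_fun_id_gaussianReal]; simp
lemma inv_eq_lintegral (s : ℝ) (hs : 0 ≤ s) :
    (ENNReal.ofReal s)⁻¹ = ∫⁻ t in Set.Ioi (0 : ℝ), ENNReal.ofReal (Real.exp (-(t * s))) := by
  rcases hs.eq_or_lt with rfl | hs
  · simp
  · have h1 : IntegrableOn (fun x : ℝ => Real.exp (-s * x)) (Set.Ioi 0) :=
      integrableOn_exp_mul_Ioi (by linarith) 0
    have h2 := integral_exp_mul_Ioi (a := -s) (by linarith) 0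
    have h3 := ofReal_integral_eq_lintegral_ofReal h1 (ae_of_all _ fun x => (Real.exp_pos _).le)
    rw [h2] at h3
    have e : ∀ t : ℝ, -(t * s) = -s * t := fun t => by ring
    simp_rw [e]
    rw [← h3, ← ENNReal.ofReal_inv_of_pos hs]
    congr 1
    simp

lemma gauss_exp_integral (t : ℝ) (ht : 0 < t) :
    ∫ x, Real.exp (-(t * x ^ 2)) ∂(gaussianReal 0 1) = (1 + 2 * t) ^ (-(1 / 2) : ℝ) := by
  rw [integral_gaussianReal_eq_integral_smul (by norm_num)]
  have : ∀ x : ℝ, gaussianPDFReal 0 1 x • Real.exp (-(t * x ^ 2))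
      = (√(2 * Real.pi))⁻¹ * Real.exp (-(t + 1 / 2) * x ^ 2) := by
    intro x
    simp only [gaussianPDFReal, smul_eq_mul, mul_assoc, ← Real.exp_add]
    simp
    left; ring
  simp_rw [this]
  rw [integral_const_mul, integral_gaussian, ← Real.sqrt_inv, ← Real.sqrt_mul (by positivity),
    Real.sqrt_eq_rpow, Real.rpow_neg (by positivity), ← Real.inv_rpow (by positivity)]
  congr 1
  have := Real.pi_pos
  field_simp
  ring

lemma lintegral_exp_pi {m : ℕ} (t : ℝ) (ht : 0 < t) :
    ∫⁻ x : Fin m → ℝ, ENNReal.ofReal (Real.exp (-(t * ∑ i, (x i) ^ 2)))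
      ∂(Measure.pi fun _ => gaussianReal 0 1) = ENNReal.ofReal ((1 + 2 * t) ^ (-(m / 2) : ℝ)) := by
  have e : ∀ x : Fin m → ℝ, Real.exp (-(t * ∑ i, (x i) ^ 2))
      = ∏ i, Real.exp (-(t * (x i) ^ 2)) := by
    intro x
    rw [← Real.exp_sum, Finset.mul_sum, Finset.sum_neg_distrib]
  rw [← ofReal_integral_eq_lintegral_ofReal]
  · congr 1
    simp_rw [e]
    rw [integral_fintype_prod_eq_prod (f := fun _ x => Real.exp (-(t * x ^ 2)))]
    simp only [gauss_exp_integral t ht, Finset.prod_const, Finset.card_univ, Fintype.card_fin]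
    rw [← Real.rpow_natCast, ← Real.rpow_mul (by positivity)]
    congr 1
    ring
  · refine Integrable.of_bound (C := 1) (Measurable.aestronglyMeasurable (by fun_prop))
      (ae_of_all _ fun x => ?_)
    rw [Real.norm_eq_abs, Real.abs_exp, Real.exp_le_one_iff]
    have : 0 ≤ ∑ i, (x i) ^ 2 := Finset.sum_nonneg fun i _ => sq_nonneg _
    nlinarith
  · exact ae_of_all _ fun x => (Real.exp_pos _).le

lemma lintegral_rpow_tail (m : ℕ) (hm : 3 ≤ m) :
    ∫⁻ t in Set.Ioi (0 : ℝ), ENNReal.ofReal ((1 + 2 * t) ^ (-(m / 2) : ℝ))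
      = ENNReal.ofReal (1 / ((m : ℝ) - 2)) := by
  have hm' : (3 : ℝ) ≤ m := by exact_mod_cast hm
  have hd : ∀ x ∈ Set.Ici (0 : ℝ), HasDerivAt
      (fun t : ℝ => -(1 / ((m : ℝ) - 2)) * (1 + 2 * t) ^ (-(((m : ℝ) - 2) / 2)))
      ((1 + 2 * x) ^ (-(m / 2) : ℝ)) x := by
    intro x hx
    have hx' : (0 : ℝ) ≤ x := hx
    have h1 : HasDerivAt (fun t : ℝ => 1 + 2 * t) 2 x := by
      simpa using ((hasDerivAt_id x).const_mul 2).const_add 1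
    have h2 := (h1.rpow_const (p := -(((m : ℝ) - 2) / 2)) (Or.inl (by positivity))).const_mul
      (-(1 / ((m : ℝ) - 2)))
    have e : (-(((m : ℝ) - 2) / 2) - 1) = -(m / 2) := by ring
    have h3 : (m : ℝ) - 2 ≠ 0 := by linarith
    have hE : -(1 / ((m : ℝ) - 2)) * (2 * -(((m : ℝ) - 2) / 2) *
        (1 + 2 * x) ^ (-(((m : ℝ) - 2) / 2) - 1)) = (1 + 2 * x) ^ (-(m / 2) : ℝ) := by
      rw [e]
      field_simp
    rw [← hE]
    exact h2
  have hpos : ∀ x ∈ Set.Ioi (0 : ℝ), (0 : ℝ) ≤ (1 + 2 * x) ^ (-(m / 2) : ℝ) := by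
    intro x hx
    have hx' : (0 : ℝ) < x := hx
    positivity
  have hlim : Filter.Tendsto
      (fun t : ℝ => -(1 / ((m : ℝ) - 2)) * (1 + 2 * t) ^ (-(((m : ℝ) - 2) / 2)))
      Filter.atTop (nhds (-(1 / ((m : ℝ) - 2)) * 0)) := by
    refine Filter.Tendsto.const_mul _ ?_
    refine (tendsto_rpow_neg_atTop (by linarith)).comp ?_
    exact Filter.tendsto_atTop_add_const_left _ _ (Filter.tendsto_id.const_mul_atTop (by norm_num))
  have hi := integrableOn_Ioi_deriv_of_nonneg' hd hpos hlim
  have hv := integral_Ioi_of_hasDerivAt_of_nonneg' hd hpos hlim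
  rw [← ofReal_integral_eq_lintegral_ofReal hi
    ((ae_restrict_iff' measurableSet_Ioi).2 (ae_of_all _ hpos)), hv]
  congr 1
  simp

lemma lintegral_inv_chi {m : ℕ} (hm : 3 ≤ m) :
    ∫⁻ x : Fin m → ℝ, (ENNReal.ofReal (∑ i, (x i) ^ 2))⁻¹
      ∂(Measure.pi fun _ => gaussianReal 0 1) = ENNReal.ofReal (1 / ((m : ℝ) - 2)) := by
  have h1 : ∀ x : Fin m → ℝ, (ENNReal.ofReal (∑ i, (x i) ^ 2))⁻¹
      = ∫⁻ t in Set.Ioi (0 : ℝ), ENNReal.ofReal (Real.exp (-(t * ∑ i, (x i) ^ 2))) :=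
    fun x => inv_eq_lintegral _ (Finset.sum_nonneg fun i _ => sq_nonneg _)
  simp_rw [h1]
  rw [lintegral_lintegral_swap (by fun_prop), ← lintegral_rpow_tail m hm]
  refine setLIntegral_congr_fun measurableSet_Ioi fun t ht => ?_
  exact lintegral_exp_pi t ht

lemma map_proj_stdGaussian {k : ℕ} (V : Submodule ℝ (EuclideanSpace ℝ (Fin k))) :
    (stdGaussian (EuclideanSpace ℝ (Fin k))).map V.orthogonalProjectionOnto = stdGaussian V := by
  have : IsFiniteMeasure ((stdGaussian (EuclideanSpace ℝ (Fin k))).map V.orthogonalProjectionOnto) := by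
    infer_instance
  apply Measure.ext_of_charFun
  ext t
  rw [charFun_stdGaussian, charFun_apply, integral_map (by fun_prop)
    (Measurable.aestronglyMeasurable (by fun_prop))]
  have := charFun_stdGaussian (E := EuclideanSpace ℝ (Fin k)) (t : EuclideanSpace ℝ (Fin k))
  rw [charFun_apply] at this
  simp only [Submodule.coe_norm] at this ⊢
  rw [← this]
  congr
  ext x
  rw [Submodule.inner_orthogonalProjectionOnto_eq_of_mem_right]

lemma lintegral_inv_proj {k m : ℕ} (V : Submodule ℝ (EuclideanSpace ℝ (Fin k))) (hm : 3 ≤ m)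
    (hV : m ≤ Module.finrank ℝ V) :
    ∫⁻ g : Fin k → ℝ, (ENNReal.ofReal (‖V.starProjection (WithLp.toLp 2 g)‖ ^ 2))⁻¹
      ∂(Measure.pi fun _ => gaussianReal 0 1) ≤ ENNReal.ofReal (1 / ((m : ℝ) - 2)) := by
  have hmeas : Measurable (fun v : V => (ENNReal.ofReal (‖v‖ ^ 2))⁻¹) := by fun_prop
  have h1 : ∫⁻ g : Fin k → ℝ, (ENNReal.ofReal (‖V.starProjection (WithLp.toLp 2 g)‖ ^ 2))⁻¹
      ∂(Measure.pi fun _ => gaussianReal 0 1)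
      = ∫⁻ v, (ENNReal.ofReal (‖v‖ ^ 2))⁻¹ ∂(stdGaussian V) := by
    rw [← map_proj_stdGaussian, ← map_pi_eq_stdGaussian, lintegral_map hmeas (by fun_prop),
      lintegral_map (by fun_prop) (by fun_prop)]
    rfl
  have h2 : ∫⁻ v, (ENNReal.ofReal (‖v‖ ^ 2))⁻¹ ∂(stdGaussian V)
      = ENNReal.ofReal (1 / ((Module.finrank ℝ V : ℝ) - 2)) := by
    rw [← lintegral_inv_chi (hm.trans hV), stdGaussian, lintegral_map hmeas (by fun_prop)]
    congr
    ext x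
    congr
    set b := stdOrthonormalBasis ℝ V
    rw [← b.sum_sq_norm_inner_right]
    refine Finset.sum_congr rfl fun i _ => ?_
    rw [Real.norm_eq_abs, sq_abs, b.orthonormal.inner_right_fintype]
  rw [h1, h2]
  apply ENNReal.ofReal_le_ofReal
  have : (m : ℝ) ≤ Module.finrank ℝ V := by exact_mod_cast hV
  have : (3 : ℝ) ≤ m := by exact_mod_cast hm
  apply one_div_le_one_div_of_le <;> linarith
section Dual

variable {ι : Type} [Fintype ι] {k : ℕ}

/-- Span of the rows other than `i`. -/
noncomputable def spanOthers (x : ι → Fin k → ℝ) (i : ι) :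
    Submodule ℝ (EuclideanSpace ℝ (Fin k)) :=
  Submodule.span ℝ (Set.range fun l : {l : ι // l ≠ i} => WithLp.toLp 2 (x l))

/-- Component of row `i` orthogonal to the other rows. -/
noncomputable def wvec (x : ι → Fin k → ℝ) (i : ι) : EuclideanSpace ℝ (Fin k) :=
  (spanOthers x i)ᗮ.starProjection (WithLp.toLp 2 (x i))

/-- Dual basis vector. -/
noncomputable def dualv (x : ι → Fin k → ℝ) (i : ι) : EuclideanSpace ℝ (Fin k) :=
  (‖wvec x i‖ ^ 2)⁻¹ • wvec x i

lemma wvec_inner_ne (x : ι → Fin k → ℝ) {i l : ι} (h : l ≠ i) :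
    inner ℝ (wvec x i) (WithLp.toLp 2 (x l)) = 0 := by
  have h1 : wvec x i ∈ (spanOthers x i)ᗮ := Submodule.starProjection_apply_mem _ _
  have h2 : WithLp.toLp 2 (x l) ∈ spanOthers x i := Submodule.subset_span ⟨⟨l, h⟩, rfl⟩
  exact Submodule.inner_left_of_mem_orthogonal h2 h1

lemma wvec_inner_self (x : ι → Fin k → ℝ) (i : ι) :
    inner ℝ (wvec x i) (WithLp.toLp 2 (x i)) = ‖wvec x i‖ ^ 2 := by
  have h1 : wvec x i ∈ (spanOthers x i)ᗮ := Submodule.starProjection_apply_mem _ _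
  have h2 : WithLp.toLp 2 (x i) - wvec x i ∈ (spanOthers x i)ᗮᗮ :=
    Submodule.sub_starProjection_mem_orthogonal _
  have h3 : inner ℝ (wvec x i) (WithLp.toLp 2 (x i) - wvec x i) = 0 :=
    Submodule.inner_right_of_mem_orthogonal h1 h2
  rw [inner_sub_right, real_inner_self_eq_norm_sq] at h3
  linarith

lemma dualv_inner (x : ι → Fin k → ℝ) (i l : ι) (h : wvec x i ≠ 0) :
    ∑ a, dualv x i a * x l a = if l = i then 1 else 0 := by
  have e : ∑ a, dualv x i a * x l a = inner ℝ (dualv x i) (WithLp.toLp 2 (x l)) := by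
    simp [PiLp.inner_apply, mul_comm]
  rw [e, dualv, inner_smul_left]
  split_ifs with hl
  · subst hl
    rw [wvec_inner_self]
    have : ‖wvec x l‖ ≠ 0 := norm_ne_zero_iff.2 h
    simp [this]
  · rw [wvec_inner_ne x hl, mul_zero]

lemma dualv_sq (x : ι → Fin k → ℝ) (i : ι) (h : wvec x i ≠ 0) :
    ENNReal.ofReal (∑ a, (dualv x i a) ^ 2) = (ENNReal.ofReal (‖wvec x i‖ ^ 2))⁻¹ := by
  have hn : 0 < ‖wvec x i‖ := norm_pos_iff.2 h
  rw [← ENNReal.ofReal_inv_of_pos (by positivity), ← EuclideanSpace.real_norm_sq_eq, dualv,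
    norm_smul]
  congr 1
  rw [Real.norm_of_nonneg (by positivity)]
  field_simp

lemma spanOthers_finrank (x : ι → Fin k → ℝ) (i : ι) :
    k + 1 ≤ Module.finrank ℝ (spanOthers x i)ᗮ + Fintype.card ι := by
  have h1 := Submodule.finrank_add_finrank_orthogonal (spanOthers x i)
  rw [finrank_euclideanSpace_fin] at h1
  have h2 : Module.finrank ℝ (spanOthers x i) ≤ Fintype.card {l : ι // l ≠ i} :=
    finrank_range_le_card _
  have h3 : Fintype.card {l : ι // l ≠ i} = Fintype.card ι - 1 := by
    simp [Fintype.card_subtype_compl]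
  have h4 : 0 < Fintype.card ι := Fintype.card_pos_iff.2 ⟨i⟩
  omega

lemma measurable_wvec_norm (i : ι) :
    Measurable (fun x : ι → Fin k → ℝ => ENNReal.ofReal ‖wvec x i‖) := by
  have e : (fun x : ι → Fin k → ℝ => ENNReal.ofReal ‖wvec x i‖)
      = fun x => ⨅ c : {l : ι // l ≠ i} → ℝ, ENNReal.ofReal
        ‖WithLp.toLp 2 (x i) - ∑ l, c l • WithLp.toLp 2 (x l)‖ := by
    ext x
    have hw : wvec x i = WithLp.toLp 2 (x i) - (spanOthers x i).starProjection
        (WithLp.toLp 2 (x i)) := by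
      rw [wvec, Submodule.starProjection_orthogonal']
      rfl
    apply le_antisymm
    · refine le_iInf fun c => ENNReal.ofReal_le_ofReal ?_
      rw [hw, Submodule.starProjection_minimal]
      have hmem : ∑ l, c l • WithLp.toLp 2 (x (l : ι)) ∈ spanOthers x i :=
        Submodule.sum_mem _ fun l _ => Submodule.smul_mem _ _ (Submodule.subset_span ⟨l, rfl⟩)
      exact ciInf_le (f := fun v : spanOthers x i => ‖WithLp.toLp 2 (x i) - (v : EuclideanSpace ℝ (Fin k))‖)
        ⟨0, by rintro _ ⟨v, rfl⟩; exact norm_nonneg _⟩ ⟨_, hmem⟩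
    · have hmem : (spanOthers x i).starProjection (WithLp.toLp 2 (x i)) ∈ spanOthers x i :=
        Submodule.starProjection_apply_mem _ _
      obtain ⟨c, hc⟩ := (Submodule.mem_span_range_iff_exists_fun ℝ).1 hmem
      refine (iInf_le _ c).trans ?_
      rw [hc, ← hw]
  rw [e]
  refine (upperSemicontinuous_iInf fun c => ?_).measurable
  refine Continuous.upperSemicontinuous ?_
  refine ENNReal.continuous_ofReal.comp ?_
  fun_prop

lemma measurable_wvec_inv (i : ι) :
    Measurable (fun x : ι → Fin k → ℝ => (ENNReal.ofReal (‖wvec x i‖ ^ 2))⁻¹) := by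
  have := measurable_wvec_norm (ι := ι) (k := k) i
  simp_rw [ENNReal.ofReal_pow (norm_nonneg _)]
  fun_prop

lemma spanOthers_update (x : ι → Fin k → ℝ) (i : ι) (y : Fin k → ℝ) :
    spanOthers (Function.update x i y) i = spanOthers x i := by
  unfold spanOthers
  congr 2
  ext l : 1
  rw [Function.update_of_ne l.2]

lemma lintegral_inv_wvec (i : ι) (hk : Fintype.card ι + 1 < k) :
    ∫⁻ x : ι → Fin k → ℝ, (ENNReal.ofReal (‖wvec x i‖ ^ 2))⁻¹
      ∂(Measure.pi fun _ => Measure.pi fun _ => gaussianReal 0 1)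
      ≤ ENNReal.ofReal (1 / ((k : ℝ) - Fintype.card ι - 1)) := by
  set c := ENNReal.ofReal (1 / ((k : ℝ) - Fintype.card ι - 1)) with hc
  have : c = ∫⁻ x : ι → Fin k → ℝ, c
      ∂(Measure.pi fun _ => Measure.pi fun _ => gaussianReal 0 1) := by simp
  rw [this]
  refine lintegral_le_of_lmarginal_le {i} (measurable_wvec_inv i) measurable_const ?_
  intro x
  rw [lmarginal_singleton, lmarginal_singleton]
  simp only [lintegral_const, measure_univ, mul_one]
  simp only [wvec, spanOthers_update, Function.update_self]
  refine (lintegral_inv_proj (m := k - Fintype.card ι + 1) _ (by omega) ?_).trans ?_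
  · have := spanOthers_finrank x i
    omega
  · rw [hc]
    apply le_of_eq
    congr 2
    push_cast [Nat.cast_sub (show Fintype.card ι ≤ k by omega)]
    ring

lemma ae_wvec_ne_zero (i : ι) (hk : Fintype.card ι + 1 < k) :
    ∀ᵐ x : ι → Fin k → ℝ ∂(Measure.pi fun _ => Measure.pi fun _ => gaussianReal 0 1),
      wvec x i ≠ 0 := by
  have h := lintegral_inv_wvec i hk
  have h1 := ae_lt_top (measurable_wvec_inv i) (h.trans_lt ENNReal.ofReal_lt_top).ne
  filter_upwards [h1] with x hx h0
  rw [h0] at hx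
  simp at hx

end Dual
/-- The pointwise error bound. -/
noncomputable def errBound {n k ϱ : ℕ} (lam : Fin n → ℝ)
    (x : {i : Fin n // (i : ℕ) < ϱ} → Fin k → ℝ) (y : {i : Fin n // ¬ (i : ℕ) < ϱ} → Fin k → ℝ) : ℝ :=
  ∑ j : {i : Fin n // ¬ (i : ℕ) < ϱ}, lam j * (1 + ∑ i, (∑ a, dualv x i a * y j a) ^ 2)

lemma trace_le_errBound {n k ϱ : ℕ} (A U : Matrix (Fin n) (Fin n) ℝ) (hA : A.PosSemidef)
    (lam : Fin n → ℝ) (hU : Uᴴ * U = 1) (hU' : U * Uᴴ = 1) (hAU : A = U * diagonal lam * Uᴴ)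
    (G : Matrix (Fin n) (Fin k) ℝ)
    (x : {i : Fin n // (i : ℕ) < ϱ} → Fin k → ℝ) (y : {i : Fin n // ¬ (i : ℕ) < ϱ} → Fin k → ℝ)
    (hx : ∀ (i : {i : Fin n // (i : ℕ) < ϱ}) (a : Fin k), G i a = x i a)
    (hy : ∀ (j : {i : Fin n // ¬ (i : ℕ) < ϱ}) (a : Fin k), G j a = y j a) (hw : ∀ i, wvec x i ≠ 0) :
    (A - nystrom A (U * G)).trace ≤ errBound lam x y := by
  let Z : Matrix (Fin k) (Fin n) ℝ :=
    Matrix.of fun a i => if h : (i : ℕ) < ϱ then dualv x ⟨i, h⟩ a else 0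
  refine (nystrom_trace_le A hA (U * G) (Z * Uᴴ)).trans (le_of_eq ?_)
  have e1 : 1 - U * G * (Z * Uᴴ) = U * (1 - G * Z) * Uᴴ := by
    rw [Matrix.mul_sub, Matrix.sub_mul, Matrix.mul_one, hU']
    simp only [Matrix.mul_assoc]
  have e2 : ((1 - U * G * (Z * Uᴴ))ᴴ * A * (1 - U * G * (Z * Uᴴ))).trace
      = ((1 - G * Z)ᴴ * diagonal lam * (1 - G * Z)).trace := by
    rw [e1, hAU]
    have : (U * (1 - G * Z) * Uᴴ)ᴴ * (U * diagonal lam * Uᴴ) * (U * (1 - G * Z) * Uᴴ)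
        = U * (((1 - G * Z)ᴴ * diagonal lam * (1 - G * Z)) * Uᴴ) := by
      rw [conjTranspose_mul, conjTranspose_mul, conjTranspose_conjTranspose]
      calc _ = U * (1 - G * Z)ᴴ * (Uᴴ * U) * diagonal lam * (Uᴴ * U) * (1 - G * Z) * Uᴴ := by
            simp only [Matrix.mul_assoc]
        _ = _ := by rw [hU]; simp only [Matrix.mul_assoc, Matrix.mul_one]
    rw [this, Matrix.trace_mul_comm, Matrix.mul_assoc, hU, Matrix.mul_one]
  have e3 : ((1 - G * Z)ᴴ * diagonal lam * (1 - G * Z)).trace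
      = ∑ j, lam j * ∑ i, ((1 - G * Z : Matrix (Fin n) (Fin n) ℝ) j i) ^ 2 := by
    simp only [Matrix.trace, Matrix.diag_apply, Matrix.mul_apply (N := 1 - G * Z),
      Matrix.mul_diagonal, conjTranspose_apply, star_trivial]
    rw [Finset.sum_comm]
    refine Finset.sum_congr rfl fun j _ => ?_
    rw [Finset.mul_sum]
    refine Finset.sum_congr rfl fun i _ => by ring
  rw [e2, e3, errBound]
  have ent1 : ∀ (j : Fin n) (i : {i : Fin n // (i : ℕ) < ϱ}),
      (G * Z) j i = ∑ a, dualv x i a * G j a := by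
    intro j i
    rw [Matrix.mul_apply]
    refine Finset.sum_congr rfl fun a _ => ?_
    simp [Z, i.2, mul_comm]
  have ent2 : ∀ (j : Fin n) (i : {i : Fin n // ¬ (i : ℕ) < ϱ}), (G * Z) j i = 0 := by
    intro j i
    rw [Matrix.mul_apply]
    refine Finset.sum_eq_zero fun a _ => ?_
    simp only [Z, Matrix.of_apply, dif_neg i.2, mul_zero]
  rw [← Fintype.sum_subtype_add_sum_subtype (fun i : Fin n => (i : ℕ) < ϱ)]
  have z1 : ∑ j : {i : Fin n // (i : ℕ) < ϱ}, lam j * ∑ i, ((1 - G * Z : Matrix (Fin n) (Fin n) ℝ) j i) ^ 2 = 0 := by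
    refine Finset.sum_eq_zero fun j _ => ?_
    rw [mul_eq_zero]; right
    refine Finset.sum_eq_zero fun i _ => ?_
    rw [sq_eq_zero_iff, Matrix.sub_apply]
    by_cases h : (i : ℕ) < ϱ
    · rw [ent1 j ⟨i, h⟩]
      simp only [hx]
      rw [dualv_inner x _ _ (hw _)]
      simp only [Matrix.one_apply, Subtype.ext_iff]
      simp
    · rw [ent2 j ⟨i, h⟩, Matrix.one_apply_ne, sub_zero]
      rintro rfl
      exact h j.2
  rw [z1, zero_add]
  refine Finset.sum_congr rfl fun j _ => ?_
  congr 1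
  rw [← Fintype.sum_subtype_add_sum_subtype (fun i : Fin n => (i : ℕ) < ϱ), add_comm]
  congr 1
  · rw [Finset.sum_eq_single j]
    · rw [Matrix.sub_apply, ent2]; simp
    · intro i _ hij
      rw [Matrix.sub_apply, ent2, Matrix.one_apply_ne]
      · simp
      · exact fun h => hij (Subtype.ext h.symm)
    · simp
  · refine Finset.sum_congr rfl fun i _ => ?_
    rw [Matrix.sub_apply, ent1, Matrix.one_apply_ne, zero_sub, neg_sq]
    · simp only [hy]
    · intro h
      have := i.2
      rw [← h] at this
      exact j.2 this

lemma lintegral_errBound {n k ϱ : ℕ} (lam : Fin n → ℝ) (hl : ∀ i, 0 ≤ lam i)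
    (x : {i : Fin n // (i : ℕ) < ϱ} → Fin k → ℝ) (hw : ∀ i, wvec x i ≠ 0) :
    ∫⁻ y, ENNReal.ofReal (errBound lam x y)
      ∂(Measure.pi fun _ => Measure.pi fun _ => gaussianReal 0 1)
      = ∑ j : {i : Fin n // ¬ (i : ℕ) < ϱ}, ENNReal.ofReal (lam j) *
        (1 + ∑ i, (ENNReal.ofReal (‖wvec x i‖ ^ 2))⁻¹) := by
  have e : ∀ y : {i : Fin n // ¬ (i : ℕ) < ϱ} → Fin k → ℝ, ENNReal.ofReal (errBound lam x y)
      = ∑ j : {i : Fin n // ¬ (i : ℕ) < ϱ}, ENNReal.ofReal (lam j) *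
        (1 + ∑ i, ENNReal.ofReal ((∑ a, dualv x i a * y j a) ^ 2)) := by
    intro y
    have hs : ∀ j : {i : Fin n // ¬ (i : ℕ) < ϱ}, 0 ≤ ∑ i, (∑ a, dualv x i a * y j a) ^ 2 :=
      fun j => Finset.sum_nonneg fun i _ => sq_nonneg _
    rw [errBound, ENNReal.ofReal_sum_of_nonneg
      fun j _ => mul_nonneg (hl _) (by have := hs j; positivity)]
    refine Finset.sum_congr rfl fun j _ => ?_
    rw [ENNReal.ofReal_mul (hl _), ENNReal.ofReal_add zero_le_one (hs j), ENNReal.ofReal_one,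
      ENNReal.ofReal_sum_of_nonneg fun i _ => sq_nonneg _]
  simp_rw [e]
  rw [lintegral_finsetSum _ (fun j _ => by fun_prop)]
  refine Finset.sum_congr rfl fun j _ => ?_
  rw [lintegral_const_mul _ (by fun_prop), lintegral_add_left measurable_const,
    lintegral_finsetSum _ (fun i _ => by fun_prop)]
  simp only [lintegral_const, measure_univ, mul_one]
  congr 2
  refine Finset.sum_congr rfl fun i _ => ?_
  rw [← dualv_sq x i (hw i), ← lintegral_inner_sq]
  exact (measurePreserving_eval (fun _ : {i : Fin n // ¬ (i : ℕ) < ϱ} =>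
    Measure.pi fun _ : Fin k => gaussianReal 0 1) j).lintegral_comp
    (f := fun g : Fin k → ℝ => ENNReal.ofReal ((∑ a, dualv x i a * g a) ^ 2)) (by fun_prop)

lemma lintegral_trace_le {n k ϱ : ℕ} (A : Matrix (Fin n) (Fin n) ℝ) (hA : A.PosSemidef)
    (hkn : k ≤ n) (hϱ : ϱ + 1 < k) :
    ∫⁻ ω, ENNReal.ofReal ((A - nystrom A (Matrix.of ω)).trace) ∂(gaussianEnsemble n k)
      ≤ ENNReal.ofReal ((1 + (ϱ : ℝ) / ((k : ℝ) - ϱ - 1)) * ∑ i ∈ Finset.Ico ϱ n, sval A i) := by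
  obtain ⟨U, hU, hU', hAU⟩ := exists_sval_decomp A hA
  set lam : Fin n → ℝ := fun i => sval A i with hlam
  have hl : ∀ i, 0 ≤ lam i := fun i => sval_nonneg' A i
  have hcard : Fintype.card {i : Fin n // (i : ℕ) < ϱ} = ϱ := by
    rw [Fintype.card_subtype]
    have := Fin.card_filter_val_lt (n := n) (m := ϱ)
    simp only [this]
    omega
  -- rotate
  have hrot := ensemble_rotation (k := k) U hU
  have s1 : ∫⁻ ω, ENNReal.ofReal ((A - nystrom A (Matrix.of ω)).trace) ∂(gaussianEnsemble n k)
      ≤ ∫⁻ ω, ENNReal.ofReal ((A - nystrom A (U * Matrix.of ω)).trace)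
        ∂(gaussianEnsemble n k) := by
    conv_lhs => rw [← hrot.map_eq]
    exact lintegral_map_le _ _
  -- split
  have hsplit := (measurePreserving_piEquivPiSubtypeProd
    (fun _ : Fin n => Measure.pi fun _ : Fin k => gaussianReal 0 1)
    (fun i : Fin n => (i : ℕ) < ϱ)).symm
  have s2 := hsplit.lintegral_comp_emb (MeasurableEquiv.measurableEmbedding _)
    (fun ω => ENNReal.ofReal ((A - nystrom A (U * Matrix.of ω)).trace))
  have hae : ∀ᵐ x : {i : Fin n // (i : ℕ) < ϱ} → Fin k → ℝ
      ∂(Measure.pi fun _ => Measure.pi fun _ => gaussianReal 0 1), ∀ i, wvec x i ≠ 0 :=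
    ae_all_iff.2 fun i => ae_wvec_ne_zero i (by rw [hcard]; exact hϱ)
  refine s1.trans ?_
  unfold gaussianEnsemble
  rw [← s2]
  refine (lintegral_prod_le _).trans ?_
  have s3 : ∀ᵐ x : {i : Fin n // (i : ℕ) < ϱ} → Fin k → ℝ
      ∂(Measure.pi fun _ => Measure.pi fun _ => gaussianReal 0 1),
      ∫⁻ y, ENNReal.ofReal ((A - nystrom A (U * Matrix.of
        ((MeasurableEquiv.piEquivPiSubtypeProd (fun _ : Fin n => Fin k → ℝ)
          (fun i : Fin n => (i : ℕ) < ϱ)).symm (x, y)))).trace)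
        ∂(Measure.pi fun _ => Measure.pi fun _ => gaussianReal 0 1)
      ≤ ∑ j : {i : Fin n // ¬ (i : ℕ) < ϱ}, ENNReal.ofReal (lam j) *
        (1 + ∑ i, (ENNReal.ofReal (‖wvec x i‖ ^ 2))⁻¹) := by
    filter_upwards [hae] with x hx
    rw [← lintegral_errBound lam hl x hx]
    refine lintegral_mono fun y => ENNReal.ofReal_le_ofReal ?_
    refine trace_le_errBound A U hA lam hU hU' hAU _ x y ?_ ?_ hx
    · intro i a
      simp [MeasurableEquiv.piEquivPiSubtypeProd, Equiv.piEquivPiSubtypeProd, i.2]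
    · intro i a
      simp only [MeasurableEquiv.piEquivPiSubtypeProd, Equiv.piEquivPiSubtypeProd]
      simp [i.2]
  refine (lintegral_mono_ae s3).trans ?_
  have hmi := fun i => measurable_wvec_inv (ι := {i : Fin n // (i : ℕ) < ϱ}) (k := k) i
  have hms : Measurable (fun x : {i : Fin n // (i : ℕ) < ϱ} → Fin k → ℝ =>
      ∑ i, (ENNReal.ofReal (‖wvec x i‖ ^ 2))⁻¹) := Finset.measurable_sum _ fun i _ => hmi i
  have hms1 : Measurable (fun x : {i : Fin n // (i : ℕ) < ϱ} → Fin k → ℝ =>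
      1 + ∑ i, (ENNReal.ofReal (‖wvec x i‖ ^ 2))⁻¹) := hms.const_add 1
  rw [lintegral_finsetSum _ (fun j _ => hms1.const_mul _)]
  have hpos : (0 : ℝ) < (k : ℝ) - ϱ - 1 := by
    have : ((ϱ + 1 : ℕ) : ℝ) < k := by exact_mod_cast hϱ
    push_cast at this; linarith
  have s4 : ∀ j : {i : Fin n // ¬ (i : ℕ) < ϱ},
      ∫⁻ x : {i : Fin n // (i : ℕ) < ϱ} → Fin k → ℝ, ENNReal.ofReal (lam j) *
        (1 + ∑ i, (ENNReal.ofReal (‖wvec x i‖ ^ 2))⁻¹)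
        ∂(Measure.pi fun _ => Measure.pi fun _ => gaussianReal 0 1)
      ≤ ENNReal.ofReal (lam j * (1 + (ϱ : ℝ) / ((k : ℝ) - ϱ - 1))) := by
    intro j
    rw [lintegral_const_mul _ hms1, lintegral_add_left measurable_const,
      lintegral_finsetSum _ (fun i _ => hmi i), ENNReal.ofReal_mul (hl _),
      ENNReal.ofReal_add zero_le_one (by positivity)]
    simp only [lintegral_const, measure_univ, mul_one, ENNReal.ofReal_one]
    gcongr
    refine (Finset.sum_le_card_nsmul _ _ _ fun i _ =>
      lintegral_inv_wvec i (by rw [hcard]; exact hϱ)).trans (le_of_eq ?_)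
    rw [Finset.card_univ, hcard, nsmul_eq_mul, ← ENNReal.ofReal_natCast,
      ← ENNReal.ofReal_mul (by positivity)]
    congr 1
    ring
  refine (Finset.sum_le_sum fun j _ => s4 j).trans (le_of_eq ?_)
  rw [← ENNReal.ofReal_sum_of_nonneg fun j _ => mul_nonneg (hl _) (by positivity),
    ← Finset.sum_mul, mul_comm]
  congr 2
  rw [← Finset.sum_subtype (Finset.univ.filter fun i : Fin n => ¬ (i : ℕ) < ϱ) (by simp) lam]
  rw [Finset.sum_filter, Fin.sum_univ_eq_sum_range (fun i => if ¬ i < ϱ then sval A i else 0) n,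
    ← Finset.sum_filter]
  congr 1
  ext i
  simp [and_comm]

theorem stmt5 {n k r : ℕ} (A : Matrix (Fin n) (Fin n) ℝ) (hA : A.PosSemidef)
    (hr : 1 ≤ r) (hrk : r ≤ k) (hkn : k ≤ n) :
    ∀ ϱ : ℕ, ϱ + 1 < k →
      (∫ ω, schatten 1 (A - nystrom A (Matrix.of ω)) ∂ gaussianEnsemble n k)
        ≤ (1 + (ϱ : ℝ) / ((k : ℝ) - ϱ - 1)) * ∑ i ∈ Finset.Ico ϱ n, sval A i := by
  intro ϱ hϱ
  have hpos : (0 : ℝ) < (k : ℝ) - ϱ - 1 := by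
    have : ((ϱ + 1 : ℕ) : ℝ) < k := by exact_mod_cast hϱ
    push_cast at this; linarith
  have hR : 0 ≤ (1 + (ϱ : ℝ) / ((k : ℝ) - ϱ - 1)) * ∑ i ∈ Finset.Ico ϱ n, sval A i :=
    mul_nonneg (by positivity) (Finset.sum_nonneg fun i _ => sval_nonneg' A i)
  have hf : ∀ ω : Fin n → Fin k → ℝ, schatten 1 (A - nystrom A (Matrix.of ω))
      = (A - nystrom A (Matrix.of ω)).trace :=
    fun ω => schatten_one_psd _ (nystrom_psd A hA _)
  simp_rw [hf]
  by_cases hi : Integrable (fun ω : Fin n → Fin k → ℝ => (A - nystrom A (Matrix.of ω)).trace)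
      (gaussianEnsemble n k)
  · rw [← ENNReal.ofReal_le_ofReal_iff hR, ofReal_integral_eq_lintegral_ofReal hi
      (ae_of_all _ fun ω => (nystrom_psd A hA _).trace_nonneg)]
    exact lintegral_trace_le A hA hkn hϱ
  · rw [integral_undef hi]
    exact hR

end PsdSketch
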